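/- Let ε ∈ [0, 1] and let h_u, h_v be vectors in the Euclidean space ℝ^F. Then for every real t with 0 ≤ t ≤ (1 + ε)·‖h_u − h_v‖ there exists a coefficient α ∈ [−1, 1] such that ‖(ε·h_u + α·h_v) − (ε·h_v + α·h_u)‖ = t. Hence FAGCN can freely shorten or enlarge the distance between the representations of a connected node pair to any value in [0, (1+ε)·‖h_u − h_v‖]. -/

import Mathlib

theorem fagcn_distance_range (ε : ℝ) (hε0 : 0 ≤ ε) (hε1 : ε ≤ 1) (F : ℕ)
    (hu hv : EuclideanSpace ℝ (Fin F)) (t : ℝ)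
    (ht0 : 0 ≤ t) (ht1 : t ≤ (1 + ε) * ‖hu - hv‖) :
    ∃ α : ℝ, α ∈ Set.Icc (-1 : ℝ) 1 ∧
      ‖(ε • hu + α • hv) - (ε • hv + α • hu)‖ = t := by
  have hd : 0 ≤ ‖hu - hv‖ := norm_nonneg _
  have hq0 : 0 ≤ t / ‖hu - hv‖ := div_nonneg ht0 hd
  have hq1 : t / ‖hu - hv‖ ≤ 1 + ε := div_le_of_le_mul₀ hd (by linarith) ht1
  refine ⟨ε - t / ‖hu - hv‖, ⟨by linarith, by linarith⟩, ?_⟩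
  have key : ∀ α : ℝ, (ε • hu + α • hv) - (ε • hv + α • hu) = (ε - α) • (hu - hv) := by
    intro α
    module
  rw [key, norm_smul, sub_sub_cancel, Real.norm_of_nonneg hq0]
  rcases hd.eq_or_lt with h | h
  · rw [← h] at ht1 ⊢
    linarith
  · exact div_mul_cancel₀ t h.ne'
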